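/- The function Ψ₁₀(τ) = Π_δ θ[δ](τ)², the product over the ten even characteristics δ of the squares of the theta constants, is a Siegel modular form of weight 10 for Sp(4,ℤ): for every matrix M = (A B; C D) ∈ Sp(4,ℤ) (written in 2×2 blocks) and every τ ∈ H₂, the matrix Cτ+D is invertible, (Aτ+B)(Cτ+D)⁻¹ ∈ H₂, and Ψ₁₀((Aτ+B)(Cτ+D)⁻¹) = det(Cτ+D)¹⁰ · Ψ₁₀(τ). -/

import Mathlib

open scoped BigOperators

namespace TwoLoop

/-- 2×2 complex matrices. -/
abbrev Mat2 := Matrix (Fin 2) (Fin 2) ℂ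

/-- The genus-2 Siegel upper half space: symmetric 2×2 complex matrices with
positive definite imaginary part. -/
def SiegelH2 : Set Mat2 := {τ | τ.transpose = τ ∧ (τ.map Complex.im).PosDef}

/-- A (half-integer) theta characteristic `[a;b]`, recorded by its rows `a, b ∈ {0,1}²`. -/
abbrev Char := (Fin 2 → ℤ) × (Fin 2 → ℤ)

/-- The theta constant `θ[a;b](τ) = Σ_{n ∈ ℤ²} exp(πi (n+a/2)ᵀ τ (n+a/2) + πi (n+a/2)·b)`. -/
noncomputable def theta (κ : Char) (τ : Mat2) : ℂ :=
  ∑' n : Fin 2 → ℤ,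
    Complex.exp ((Real.pi : ℂ) * Complex.I *
      ((∑ i, ∑ j, ((n i : ℂ) + (κ.1 i : ℂ) / 2) * τ i j * ((n j : ℂ) + (κ.1 j : ℂ) / 2))
        + ∑ i, ((n i : ℂ) + (κ.1 i : ℂ) / 2) * (κ.2 i : ℂ)))

/-- The ten even characteristics δ₁,…,δ₁₀. -/
def δev : Fin 10 → Char :=
  ![(![0,0], ![0,0]), (![0,0], ![0,1]), (![0,0], ![1,0]), (![0,0], ![1,1]),
    (![0,1], ![0,0]), (![0,1], ![1,0]), (![1,0], ![0,0]), (![1,0], ![0,1]),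
    (![1,1], ![0,0]), (![1,1], ![1,1])]

/-- The six odd characteristics ν₁,…,ν₆. -/
def νodd : Fin 6 → Char :=
  ![(![0,1], ![0,1]), (![1,0], ![1,0]), (![0,1], ![1,1]),
    (![1,0], ![1,1]), (![1,1], ![0,1]), (![1,1], ![1,0])]

/-- `Θ[ε](τ) = θ[ε;0](2τ)`. -/
noncomputable def Θf (ε : Fin 2 → ℤ) (τ : Mat2) : ℂ := theta (ε, ![0,0]) ((2 : ℂ) • τ)

noncomputable def P0 (τ : Mat2) : ℂ :=
  Θf ![0,0] τ ^ 4 + Θf ![0,1] τ ^ 4 + Θf ![1,0] τ ^ 4 + Θf ![1,1] τ ^ 4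
noncomputable def P1 (τ : Mat2) : ℂ :=
  2 * (Θf ![0,0] τ ^ 2 * Θf ![0,1] τ ^ 2 + Θf ![1,0] τ ^ 2 * Θf ![1,1] τ ^ 2)
noncomputable def P2 (τ : Mat2) : ℂ :=
  2 * (Θf ![0,0] τ ^ 2 * Θf ![1,0] τ ^ 2 + Θf ![0,1] τ ^ 2 * Θf ![1,1] τ ^ 2)
noncomputable def P3 (τ : Mat2) : ℂ :=
  2 * (Θf ![0,0] τ ^ 2 * Θf ![1,1] τ ^ 2 + Θf ![0,1] τ ^ 2 * Θf ![1,0] τ ^ 2)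
noncomputable def P4 (τ : Mat2) : ℂ :=
  4 * (Θf ![0,0] τ * Θf ![0,1] τ * Θf ![1,0] τ * Θf ![1,1] τ)

/-- The vector `(P₀,…,P₄)`. -/
noncomputable def Pv : Fin 5 → Mat2 → ℂ := ![P0, P1, P2, P3, P4]

open MvPolynomial in
/-- The Igusa quartic as a polynomial in `x₀,…,x₄`. -/
noncomputable def I4poly : MvPolynomial (Fin 5) ℂ :=
  X 4 ^ 4 + X 4 ^ 2 * X 0 ^ 2 - X 4 ^ 2 * X 1 ^ 2 - X 4 ^ 2 * X 2 ^ 2 - X 4 ^ 2 * X 3 ^ 2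
    + X 1 ^ 2 * X 2 ^ 2 + X 1 ^ 2 * X 3 ^ 2 + X 2 ^ 2 * X 3 ^ 2
    - 2 * (X 0 * X 1 * X 2 * X 3)

/-- The signature `⟨κ|λ⟩ = exp(πi(a_κ·b_λ − b_κ·a_λ))`. -/
noncomputable def sig (κ lam : Char) : ℂ :=
  Complex.exp ((Real.pi : ℂ) * Complex.I *
    (((∑ i, κ.1 i * lam.2 i : ℤ) : ℂ) - ((∑ i, κ.2 i * lam.1 i : ℤ) : ℂ)))

/-- Componentwise mod-2 sum of characteristics. -/
def addChar (κ lam : Char) : Char :=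
  (fun i => (κ.1 i + lam.1 i) % 2, fun i => (κ.2 i + lam.2 i) % 2)

/-- For each even characteristic `δ_d`, the ordering `(k₁,…,k₆)` of `{1,…,6}` (0-indexed) whose
first three entries form the triad of odd characteristics with `δ_d = ν_{k₁}+ν_{k₂}+ν_{k₃}`
and whose last three are the complementary indices. -/
def triad : Fin 10 → Fin 6 → Fin 6 :=
  ![![0,3,5,1,2,4], ![0,1,5,2,3,4], ![0,1,4,2,3,5], ![0,3,4,1,2,5], ![0,1,3,2,4,5],
    ![0,4,5,1,2,3], ![0,1,2,3,4,5], ![0,2,3,1,4,5], ![0,2,5,1,3,4], ![0,2,4,1,3,5]]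

/-- D'Hoker–Phong's `Ξ₆[δ]`. -/
noncomputable def Xi6 (d : Fin 10) (τ : Mat2) : ℂ :=
  ∑ i : Fin 3, ∑ j : Fin 3,
    if i < j then
      sig (νodd (triad d (Fin.castLE (by norm_num) i))) (νodd (triad d (Fin.castLE (by norm_num) j))) *
        ∏ m : Fin 3,
          theta (addChar (addChar (νodd (triad d (Fin.castLE (by norm_num) i)))
              (νodd (triad d (Fin.castLE (by norm_num) j))))
            (νodd (triad d (⟨m.1 + 3, by omega⟩ : Fin 6)))) τ ^ 4
    else 0

/-- The formal derivative `∂I₄/∂θ⁴[δ]` of the Igusa quartic with respect to the ten fourth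
powers of the even theta constants, regarded as independent variables. -/
noncomputable def Dd (d : Fin 10) (τ : Mat2) : ℂ :=
  (1 / 48 : ℂ) *
    (theta (δev d) τ ^ 4 * (∑ d' : Fin 10, theta (δev d') τ ^ 8) - 4 * theta (δev d) τ ^ 12)

/-- `f_δ = 2Ξ₆[δ] − ∂I₄/∂θ⁴[δ]`. -/
noncomputable def fδ (d : Fin 10) (τ : Mat2) : ℂ := 2 * Xi6 d τ - Dd d τ

/-- `Ψ₆`, the weight-6 modular form. -/
noncomputable def Ψ6 (τ : Mat2) : ℂ :=
  P0 τ ^ 3 - 9 * P0 τ * (P1 τ ^ 2 + P2 τ ^ 2 + P3 τ ^ 2 - 4 * P4 τ ^ 2)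
    + 54 * (P1 τ * P2 τ * P3 τ)

/-- `Ψ₁₀`, the weight-10 modular form. -/
noncomputable def Ψ10 (τ : Mat2) : ℂ := ∏ d : Fin 10, theta (δev d) τ ^ 2

/-- A characteristic is even when `a·b` is even. -/
def IsEvenChar (κ : Char) : Prop := (∑ i, κ.1 i * κ.2 i) % 2 = 0

/-- A characteristic is odd when `a·b` is odd. -/
def IsOddChar (κ : Char) : Prop := (∑ i, κ.1 i * κ.2 i) % 2 = 1

/-- The symplectic form `J = (0 I; −I 0)`. -/
def Jmat : Matrix (Fin 4) (Fin 4) ℤ := !![0,0,1,0; 0,0,0,1; -1,0,0,0; 0,-1,0,0]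

/-- The symplectic group `Sp(4,ℤ)`. -/
def Sp4Z : Set (Matrix (Fin 4) (Fin 4) ℤ) := {M | M.transpose * Jmat * M = Jmat}

/-- Upper-left 2×2 block `A` of a 4×4 integer matrix, as a complex matrix. -/
def blkA (M : Matrix (Fin 4) (Fin 4) ℤ) : Mat2 :=
  fun i j => ((M (⟨i.1, by omega⟩ : Fin 4) (⟨j.1, by omega⟩ : Fin 4) : ℤ) : ℂ)

/-- Upper-right 2×2 block `B`. -/
def blkB (M : Matrix (Fin 4) (Fin 4) ℤ) : Mat2 :=
  fun i j => ((M (⟨i.1, by omega⟩ : Fin 4) (⟨j.1 + 2, by omega⟩ : Fin 4) : ℤ) : ℂ)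

/-- Lower-left 2×2 block `C`. -/
def blkC (M : Matrix (Fin 4) (Fin 4) ℤ) : Mat2 :=
  fun i j => ((M (⟨i.1 + 2, by omega⟩ : Fin 4) (⟨j.1, by omega⟩ : Fin 4) : ℤ) : ℂ)

/-- Lower-right 2×2 block `D`. -/
def blkD (M : Matrix (Fin 4) (Fin 4) ℤ) : Mat2 :=
  fun i j => ((M (⟨i.1 + 2, by omega⟩ : Fin 4) (⟨j.1 + 2, by omega⟩ : Fin 4) : ℤ) : ℂ)

/-!
The group `Sp(4, ℤ)` is generated by the translations `τ ↦ τ + S`, the maps `τ ↦ U τ Uᵀ` with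
`U ∈ GL₂(ℤ)`, and the partial inversion which acts as `τ₀₀ ↦ -1 / τ₀₀` in the first coordinate
plane: Euclid's algorithm in the factors of `SL₂(ℤ) × SL₂(ℤ)` and in `GL₂(ℤ)` reduces any symplectic
matrix to one with `C = 0`. Since `det (C τ + D)` is a cocycle, the elements under which a function
is modular of a given weight form a subgroup, so it suffices to treat these generators.

Each generator carries the square of a theta constant to an elementary factor times the square of
another one. For a translation the factor comes from the parity of `mᵀ S m - mᵀ diag(S)`; `U` merely
relabels the lattice; the partial inversion is Jacobi's functional equation in the first summation
variable. The square of a theta constant depends only on its characteristic modulo `2`, and each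
generator permutes the ten even classes, so `Ψ₁₀` is multiplied by the product of the ten factors.
The phases cancel, leaving `(-i τ₀₀)¹⁰ e^{πi} = τ₀₀¹⁰` for the partial inversion.
-/

section SiegelUpperHalfSpace

open Matrix ComplexStarModule
open scoped ComplexOrder MatrixOrder

variable {n : Type*}

theorem posDef_map_ofReal_iff [Finite n] {Y : Matrix n n ℝ} :
    (Y.map Complex.ofReal).PosDef ↔ Y.PosDef := by
  have := Fintype.ofFinite n
  classical
  refine ⟨fun hY => .of_dotProduct_mulVec_pos ?_ fun x hx => ?_, fun hY => ?_⟩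
  · refine IsHermitian.ext fun i j => Complex.ofReal_injective ?_
    simpa using hY.isHermitian.apply i j
  · have hxC : Complex.ofReal ∘ x ≠ 0 := fun h =>
      hx <| funext fun i => Complex.ofReal_injective (congrFun h i)
    have hpos := hY.dotProduct_mulVec_pos hxC
    have hcast : star (Complex.ofReal ∘ x) ⬝ᵥ (Y.map Complex.ofReal) *ᵥ (Complex.ofReal ∘ x)
        = ((star x ⬝ᵥ Y *ᵥ x : ℝ) : ℂ) := by
      simp [dotProduct, mulVec]
    rw [hcast] at hpos
    exact_mod_cast hpos
  · obtain ⟨B, hB, rfl⟩ := CStarAlgebra.isStrictlyPositive_iff_eq_star_mul_self.1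
      (isStrictlyPositive_iff_posDef.2 hY)
    have hBC : IsUnit (B.map Complex.ofReal) := hB.map Complex.ofRealHom.mapMatrix
    have hmap : (star B * B).map Complex.ofReal
        = (B.map Complex.ofReal)ᴴ * B.map Complex.ofReal := by
      ext i j
      simp [star_eq_conjTranspose, mul_apply]
    rw [hmap]
    exact .conjTranspose_mul_self _ (mulVec_injective_of_isUnit hBC)

/-- The Siegel upper half space of genus `n`; `SiegelH2` is the case `n = Fin 2`. -/
def siegelUpperHalfSpace (n : Type*) : Set (Matrix n n ℂ) :=
  {τ | τᵀ = τ ∧ (τ.map Complex.im).PosDef}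

theorem imaginaryPart_of_transpose_eq {τ : Matrix n n ℂ} (hτ : τᵀ = τ) :
    (ℑ τ : Matrix n n ℂ) = (τ.map Complex.im).map Complex.ofReal := by
  ext i j
  have hij : τ j i = τ i j := congrFun₂ hτ i j
  rw [imaginaryPart_apply_coe]
  simp only [star_eq_conjTranspose, Matrix.smul_apply, Matrix.sub_apply,
    conjTranspose_apply, map_apply, hij, RCLike.star_def, Complex.sub_conj, Complex.real_smul,
    smul_eq_mul]
  push_cast
  linear_combination -(τ i j).im * Complex.I_sq

theorem mem_siegelUpperHalfSpace_iff [Finite n] {τ : Matrix n n ℂ} :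
    τ ∈ siegelUpperHalfSpace n ↔ τᵀ = τ ∧ (ℑ τ : Matrix n n ℂ).PosDef := by
  refine and_congr_right fun hτ => ?_
  rw [imaginaryPart_of_transpose_eq hτ, posDef_map_ofReal_iff]

end SiegelUpperHalfSpace

section SiegelAction

open Matrix ComplexStarModule
open scoped ComplexOrder

variable {n R : Type*} [Fintype n] [DecidableEq n] [CommRing R]

/-- The `2g × g` matrix `(τ; 1)`, on which the symplectic group acts by multiplication. -/
def frame (τ : Matrix n n R) : Matrix (n ⊕ n) n R := fromRows τ 1

/-- The matrix `A τ + B` attached to `M = (A B; C D)`: the upper half of `M * frame τ`. -/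
def num (M : Matrix (n ⊕ n) (n ⊕ n) R) (τ : Matrix n n R) : Matrix n n R :=
  (M * frame τ).toRows₁

/-- The matrix `C τ + D` attached to `M = (A B; C D)`: the lower half of `M * frame τ`. -/
def den (M : Matrix (n ⊕ n) (n ⊕ n) R) (τ : Matrix n n R) : Matrix n n R :=
  (M * frame τ).toRows₂

/-- The fractional linear transformation `τ ↦ (A τ + B) (C τ + D)⁻¹`; it is only meaningful where
`C τ + D` is invertible. -/
noncomputable def act (M : Matrix (n ⊕ n) (n ⊕ n) R) (τ : Matrix n n R) : Matrix n n R :=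
  num M τ * (den M τ)⁻¹

theorem mul_frame (M : Matrix (n ⊕ n) (n ⊕ n) R) (τ : Matrix n n R) :
    M * frame τ = fromRows (num M τ) (den M τ) :=
  (fromRows_toRows _).symm

theorem num_fromBlocks (A B C D τ : Matrix n n R) : num (fromBlocks A B C D) τ = A * τ + B := by
  rw [num, frame, fromBlocks_mul_fromRows, toRows₁_fromRows, mul_one]

theorem den_fromBlocks (A B C D τ : Matrix n n R) : den (fromBlocks A B C D) τ = C * τ + D := by
  rw [den, frame, fromBlocks_mul_fromRows, toRows₂_fromRows, mul_one]

theorem fromRows_num_den {M : Matrix (n ⊕ n) (n ⊕ n) R} {τ : Matrix n n R}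
    (hu : IsUnit (den M τ)) :
    fromRows (num M τ) (den M τ) = frame (act M τ) * den M τ := by
  rw [frame, fromRows_mul, act, nonsing_inv_mul_cancel_right _ _ ((isUnit_iff_isUnit_det _).1 hu),
    one_mul]

theorem fromRows_num_den_mul (M : Matrix (n ⊕ n) (n ⊕ n) R) {N : Matrix (n ⊕ n) (n ⊕ n) R}
    {τ : Matrix n n R} (hu : IsUnit (den N τ)) :
    fromRows (num (M * N) τ) (den (M * N) τ)
      = fromRows (num M (act N τ) * den N τ) (den M (act N τ) * den N τ) := by
  rw [← mul_frame, Matrix.mul_assoc, mul_frame N, fromRows_num_den hu,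
    ← Matrix.mul_assoc, mul_frame M, fromRows_mul]

theorem den_mul (M : Matrix (n ⊕ n) (n ⊕ n) R) {N : Matrix (n ⊕ n) (n ⊕ n) R}
    {τ : Matrix n n R} (hu : IsUnit (den N τ)) : den (M * N) τ = den M (act N τ) * den N τ :=
  (fromRows_inj (fromRows_num_den_mul M hu)).2

theorem act_mul (M : Matrix (n ⊕ n) (n ⊕ n) R) {N : Matrix (n ⊕ n) (n ⊕ n) R}
    {τ : Matrix n n R} (hu : IsUnit (den N τ)) : act (M * N) τ = act M (act N τ) := by
  rw [act, den_mul M hu, (fromRows_inj (fromRows_num_den_mul M hu)).1, Matrix.mul_inv_rev,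
    ← Matrix.mul_assoc, mul_nonsing_inv_cancel_right _ _ ((isUnit_iff_isUnit_det _).1 hu)]
  rfl

theorem den_one (τ : Matrix n n R) : den 1 τ = 1 := by
  rw [den, Matrix.one_mul, frame, toRows₂_fromRows]

theorem act_one (τ : Matrix n n R) : act 1 τ = τ := by
  rw [act, den_one, num, Matrix.one_mul, frame, toRows₁_fromRows, inv_one, mul_one]

theorem fromCols_mul_J_mul_fromRows (A B P Q : Matrix n n R) :
    fromCols A B * J n R * fromRows P Q = B * P - A * Q := by
  rw [J, fromCols_mul_fromBlocks, fromCols_mul_fromRows]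
  simp only [mul_zero, zero_add, mul_one, mul_neg, add_zero, neg_mul]
  rw [sub_eq_add_neg]

theorem den_transpose_mul_num_sub {M : Matrix (n ⊕ n) (n ⊕ n) R} (hM : M ∈ symplecticGroup n R)
    (τ : Matrix n n R) : (den M τ)ᵀ * num M τ - (num M τ)ᵀ * den M τ = τ - τᵀ := by
  have h : (M * frame τ)ᵀ * J n R * (M * frame τ)
      = (frame τ)ᵀ * J n R * frame τ := by
    conv_rhs => rw [← SymplecticGroup.mem_iff'.1 hM]
    simp only [transpose_mul, Matrix.mul_assoc]
  rw [mul_frame] at h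
  simpa only [frame, transpose_fromRows, fromCols_mul_J_mul_fromRows, transpose_one,
    one_mul, mul_one] using h

theorem den_conjTranspose_mul_num_sub [StarRing R] {M : Matrix (n ⊕ n) (n ⊕ n) R}
    (hM : M ∈ symplecticGroup n R) (hreal : Mᴴ = Mᵀ) (τ : Matrix n n R) :
    (den M τ)ᴴ * num M τ - (num M τ)ᴴ * den M τ = τ - τᴴ := by
  have h : (M * frame τ)ᴴ * J n R * (M * frame τ)
      = (frame τ)ᴴ * J n R * frame τ := by
    conv_rhs => rw [← SymplecticGroup.mem_iff'.1 hM, ← hreal]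
    simp only [conjTranspose_mul, Matrix.mul_assoc]
  rw [mul_frame] at h
  simpa only [frame, conjTranspose_fromRows_eq_fromCols_conjTranspose,
    fromCols_mul_J_mul_fromRows, conjTranspose_one, one_mul, mul_one] using h

theorem act_sub_transpose {M : Matrix (n ⊕ n) (n ⊕ n) R} {τ : Matrix n n R}
    (hM : M ∈ symplecticGroup n R) (hu : IsUnit (den M τ)) :
    act M τ - (act M τ)ᵀ = ((den M τ)⁻¹)ᵀ * (τ - τᵀ) * (den M τ)⁻¹ := by
  have hdet := (isUnit_iff_isUnit_det _).1 hu
  have hcancel : ((den M τ)⁻¹)ᵀ * (den M τ)ᵀ = 1 := by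
    rw [← transpose_mul, mul_nonsing_inv _ hdet, transpose_one]
  rw [← den_transpose_mul_num_sub hM τ, act, mul_sub, sub_mul, transpose_mul,
    ← Matrix.mul_assoc, hcancel, one_mul, ← Matrix.mul_assoc,
    mul_nonsing_inv_cancel_right _ _ hdet]

theorem act_sub_conjTranspose [StarRing R] {M : Matrix (n ⊕ n) (n ⊕ n) R} {τ : Matrix n n R}
    (hM : M ∈ symplecticGroup n R) (hreal : Mᴴ = Mᵀ) (hu : IsUnit (den M τ)) :
    act M τ - (act M τ)ᴴ = ((den M τ)⁻¹)ᴴ * (τ - τᴴ) * (den M τ)⁻¹ := by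
  have hdet := (isUnit_iff_isUnit_det _).1 hu
  have hcancel : ((den M τ)⁻¹)ᴴ * (den M τ)ᴴ = 1 := by
    rw [← conjTranspose_mul, mul_nonsing_inv _ hdet, conjTranspose_one]
  rw [← den_conjTranspose_mul_num_sub hM hreal τ, act, mul_sub, sub_mul, conjTranspose_mul,
    ← Matrix.mul_assoc, hcancel, one_mul, ← Matrix.mul_assoc,
    mul_nonsing_inv_cancel_right _ _ hdet]

variable {M : Matrix (n ⊕ n) (n ⊕ n) ℂ} {τ : Matrix n n ℂ}

theorem isUnit_den (hM : M ∈ symplecticGroup n ℂ) (hreal : Mᴴ = Mᵀ)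
    (hτ : τ ∈ siegelUpperHalfSpace n) : IsUnit (den M τ) := by
  rw [← mulVec_injective_iff_isUnit, ← coe_mulVecLin, injective_iff_map_eq_zero]
  intro v hv
  rw [mulVecLin_apply] at hv
  have hrel := congrArg (fun N => star v ⬝ᵥ N *ᵥ v) (den_conjTranspose_mul_num_sub hM hreal τ)
  have hzero : star v ⬝ᵥ (τ - τᴴ) *ᵥ v = 0 := by
    rw [← hrel]
    have hv' : star v ᵥ* (den M τ)ᴴ = 0 := by rw [← star_mulVec, hv, star_zero]
    simp only [sub_mulVec, ← mulVec_mulVec, hv, mulVec_zero, sub_zero, dotProduct_mulVec, hv',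
      zero_vecMul, zero_dotProduct]
  by_contra hne
  have hpos := (mem_siegelUpperHalfSpace_iff.1 hτ).2.dotProduct_mulVec_pos hne
  rw [imaginaryPart_apply_coe, star_eq_conjTranspose, smul_mulVec, smul_mulVec,
    dotProduct_smul, dotProduct_smul, hzero, smul_zero, smul_zero] at hpos
  exact lt_irrefl _ hpos

theorem act_mem_siegelUpperHalfSpace (hM : M ∈ symplecticGroup n ℂ) (hreal : Mᴴ = Mᵀ)
    (hτ : τ ∈ siegelUpperHalfSpace n) : act M τ ∈ siegelUpperHalfSpace n := by
  have hu := isUnit_den hM hreal hτ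
  obtain ⟨hsymm, hpos⟩ := mem_siegelUpperHalfSpace_iff.1 hτ
  refine mem_siegelUpperHalfSpace_iff.2 ⟨?_, ?_⟩
  · have hsub := act_sub_transpose hM hu
    rw [hsymm, sub_self, mul_zero, zero_mul, sub_eq_zero] at hsub
    exact hsub.symm
  · have him : (ℑ (act M τ) : Matrix n n ℂ) = ((den M τ)⁻¹)ᴴ * ℑ τ * (den M τ)⁻¹ := by
      simp only [imaginaryPart_apply_coe, star_eq_conjTranspose,
        act_sub_conjTranspose hM hreal hu, mul_smul_comm, smul_mul_assoc]
    rw [him]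
    exact hpos.conjTranspose_mul_mul_same
      (mulVec_injective_of_isUnit (isUnit_nonsing_inv_iff.2 hu))

end SiegelAction

section Modularity

open Matrix

variable {n : Type*} [Fintype n] [DecidableEq n]

/-- An integral symplectic matrix, viewed with complex entries so that it acts on
`siegelUpperHalfSpace n`. -/
def complexMatrix : symplecticGroup n ℤ →* Matrix (n ⊕ n) (n ⊕ n) ℂ :=
  (Int.castRingHom ℂ).mapMatrix.toMonoidHom.comp (symplecticGroup n ℤ).subtype

variable (M : symplecticGroup n ℤ) {τ : Matrix n n ℂ}

theorem complexMatrix_mem_symplecticGroup : complexMatrix M ∈ symplecticGroup n ℂ :=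
  SymplecticGroup.map_mem M.2 (Int.castRingHom ℂ)

theorem conjTranspose_complexMatrix : (complexMatrix M)ᴴ = (complexMatrix M)ᵀ := by
  ext i j
  simp [complexMatrix, Matrix.map_apply]

theorem isUnit_den_complexMatrix (hτ : τ ∈ siegelUpperHalfSpace n) :
    IsUnit (den (complexMatrix M) τ) :=
  isUnit_den (complexMatrix_mem_symplecticGroup M) (conjTranspose_complexMatrix M) hτ

theorem act_complexMatrix_mem (hτ : τ ∈ siegelUpperHalfSpace n) :
    act (complexMatrix M) τ ∈ siegelUpperHalfSpace n :=
  act_mem_siegelUpperHalfSpace (complexMatrix_mem_symplecticGroup M)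
    (conjTranspose_complexMatrix M) hτ

/-- The elements `(A B; C D)` of the Siegel modular group under which `F` transforms like a
modular form of weight `k`, namely with the automorphy factor `det (C τ + D) ^ k`. -/
def modularitySubgroup (k : ℕ) (F : Matrix n n ℂ → ℂ) : Subgroup (symplecticGroup n ℤ) where
  carrier := {M | ∀ τ ∈ siegelUpperHalfSpace n,
    F (act (complexMatrix M) τ) = (den (complexMatrix M) τ).det ^ k * F τ}
  one_mem' τ _ := by rw [map_one, act_one, den_one, det_one, one_pow, one_mul]
  mul_mem' {M N} hM hN τ hτ := by
    have hu := isUnit_den_complexMatrix N hτ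
    rw [map_mul, act_mul _ hu, hM _ (act_complexMatrix_mem N hτ), hN τ hτ, den_mul _ hu, det_mul,
      mul_pow, mul_assoc]
  inv_mem' {M} hM τ hτ := by
    have hu := isUnit_den_complexMatrix M⁻¹ hτ
    have hden := den_mul (complexMatrix M) hu
    have hF := hM _ (act_complexMatrix_mem M⁻¹ hτ)
    rw [← map_mul, mul_inv_cancel, map_one, den_one] at hden
    rw [← act_mul _ hu, ← map_mul, mul_inv_cancel, map_one, act_one] at hF
    rw [hF, ← mul_assoc, ← mul_pow, ← det_mul, mul_eq_one_comm.1 hden.symm, det_one, one_pow,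
      one_mul]

end Modularity

section Generators

open Matrix MatrixGroups

theorem exists_SL2_row_mul_add_mul_eq_zero {R : Type*} [CommRing R] [IsDomain R] [IsBezout R]
    [GCDMonoid R] (x y : R) : ∃ g : SL(2, R), g 1 0 * x + g 1 1 * y = 0 := by
  obtain ⟨x', y', hx, hy, hunit⟩ := extract_gcd x y
  have hcop : IsCoprime (-y') x' := ((gcd_isUnit_iff x' y').1 hunit).symm.neg_left
  obtain ⟨g, hg0, hg1⟩ := hcop.exists_SL2_row 1
  refine ⟨g, ?_⟩
  rw [hg0, hg1]
  linear_combination (-y') * hx + x' * hy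

theorem mulSingle_SL2_apply {n R : Type*} [DecidableEq n] [CommRing R] (i : n)
    (g : SL(2, R)) (k : n) (a b : Fin 2) :
    (Pi.mulSingle i g : n → SL(2, R)) k a b = if k = i then g a b else (1 : SL(2, R)) a b := by
  rw [Pi.mulSingle_apply]
  split_ifs <;> rfl

variable {n R : Type*} [Fintype n] [DecidableEq n] [CommRing R]

/-- The symplectic matrix `(1 S; 0 1)`, acting by `τ ↦ τ + S`. -/
def translation (S : Matrix n n R) (hS : S.IsSymm) : symplecticGroup n R :=
  ⟨fromBlocks 1 S 0 1, SymplecticGroup.fromBlocks_mem_iff.2 (by simp [hS.eq])⟩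

/-- The symplectic matrix `(U 0; 0 U⁻ᵀ)`, acting by `τ ↦ U τ Uᵀ`. -/
def levi (U : GL n R) : symplecticGroup n R :=
  ⟨fromBlocks U.val 0 0 (U⁻¹).valᵀ, SymplecticGroup.fromBlocks_mem_iff.2 (by
    simp [← transpose_mul, -coe_units_inv])⟩

/-- The diagonal embedding of `SL(2, R)ⁿ` in the symplectic group, the `i`-th factor acting on the
`i`-th coordinate plane. -/
def diagSL : (n → SL(2, R)) →* symplecticGroup n R where
  toFun g := ⟨fromBlocks (diagonal fun i => g i 0 0) (diagonal fun i => g i 0 1)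
      (diagonal fun i => g i 1 0) (diagonal fun i => g i 1 1),
    SymplecticGroup.fromBlocks_mem_iff.2 (by
      have hdet : (fun i => g i 0 0 * g i 1 1 - g i 0 1 * g i 1 0) = 1 :=
        funext fun i => by rw [← det_fin_two, (g i).det_coe, Pi.one_apply]
      simp [mul_comm, hdet])⟩
  map_one' := Subtype.ext (by simp)
  map_mul' g h := Subtype.ext (by
    simp [fromBlocks_multiply, mul_apply, Fin.sum_univ_two])

theorem toBlocks₂₁_diagSL_mul (g : n → SL(2, R)) (M : symplecticGroup n R) (i j : n) :
    (diagSL g * M).val.toBlocks₂₁ i j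
      = g i 1 0 * M.val.toBlocks₁₁ i j + g i 1 1 * M.val.toBlocks₂₁ i j := by
  simp [diagSL, mul_apply, Fintype.sum_sum_type, diagonal_apply,
    toBlocks₁₁, toBlocks₂₁]

variable {Γ : Subgroup (symplecticGroup n R)}

theorem mem_of_toBlocks₂₁_eq_zero (htranslation : ∀ S hS, translation S hS ∈ Γ)
    (hlevi : ∀ U, levi U ∈ Γ) {M : symplecticGroup n R} (hC : M.val.toBlocks₂₁ = 0) : M ∈ Γ := by
  obtain ⟨M, hM⟩ := M
  obtain ⟨A, B, C, D, rfl⟩ : ∃ A B C D, M = fromBlocks A B C D :=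
    ⟨_, _, _, _, (fromBlocks_toBlocks M).symm⟩
  obtain rfl : C = 0 := hC
  obtain ⟨-, hBD, hAD⟩ := SymplecticGroup.fromBlocks_mem_iff.1 hM
  rw [transpose_zero, Matrix.zero_mul, sub_zero] at hAD
  have hDA : Dᵀ * A = 1 := by rw [← transpose_one, ← hAD, transpose_mul, transpose_transpose]
  have hS : (Dᵀ * B).IsSymm := by
    rw [IsSymm, transpose_mul, transpose_transpose, hBD]
  let U : GL n R := ⟨A, Dᵀ, mul_eq_one_comm.1 hDA, hDA⟩
  have hdecomp : (⟨fromBlocks A B 0 D, hM⟩ : symplecticGroup n R)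
      = levi U * translation (Dᵀ * B) hS := by
    apply Subtype.ext
    change _ = fromBlocks A 0 0 Dᵀᵀ * fromBlocks 1 (Dᵀ * B) 0 1
    simp [fromBlocks_multiply, ← Matrix.mul_assoc, mul_eq_one_comm.1 hDA]
  exact hdecomp ▸ mul_mem (hlevi U) (htranslation _ hS)

theorem toBlocks₁₁_levi_mul (U : GL n R) (M : symplecticGroup n R) :
    (levi U * M).val.toBlocks₁₁ = U.val * M.val.toBlocks₁₁ := by
  ext i j
  simp [levi, toBlocks₁₁, mul_apply, Fintype.sum_sum_type]

theorem toBlocks₂₁_levi_mul (U : GL n R) (M : symplecticGroup n R) :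
    (levi U * M).val.toBlocks₂₁ = (U⁻¹).valᵀ * M.val.toBlocks₂₁ := by
  ext i j
  simp [levi, toBlocks₂₁, mul_apply, Fintype.sum_sum_type]

theorem diagSL_mulSingle_T (i : n) :
    diagSL (Pi.mulSingle i ModularGroup.T)
      = translation (single i i (1 : ℤ)) (by simp [IsSymm]) := by
  apply Subtype.ext
  change fromBlocks _ _ _ _ = fromBlocks _ _ _ _
  simp only [mulSingle_SL2_apply]
  congr 1 <;> ext j k <;> rcases eq_or_ne j k with rfl | hjk <;>
    simp_all [ModularGroup.T, single_apply, eq_comm]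

theorem diagSL_mem {Γ : Subgroup (symplecticGroup n ℤ)}
    (htranslation : ∀ S hS, translation S hS ∈ Γ)
    (hS : ∀ i, diagSL (Pi.mulSingle i ModularGroup.S) ∈ Γ) (g : n → SL(2, ℤ)) : diagSL g ∈ Γ := by
  refine Subgroup.pi_mem_of_mulSingle_mem (H := Γ.comap diagSL) g fun i => ?_
  have hle : (⊤ : Subgroup SL(2, ℤ))
      ≤ Γ.comap (diagSL.comp (MonoidHom.mulSingle (fun _ => SL(2, ℤ)) i)) := by
    rw [← SpecialLinearGroup.SL2Z_generators, Subgroup.closure_le]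
    rintro _ (rfl | rfl)
    · exact hS i
    · change diagSL (Pi.mulSingle i ModularGroup.T) ∈ Γ
      exact diagSL_mulSingle_T i ▸ htranslation _ _
  exact hle (Subgroup.mem_top (g i))

theorem diagSL_mulSingle_one (g : SL(2, R)) :
    ∃ U : GL (Fin 2) R, diagSL (Pi.mulSingle (1 : Fin 2) g)
      = levi U * diagSL (Pi.mulSingle 0 g) * (levi U)⁻¹ := by
  let U : GL (Fin 2) R := ⟨!![0, 1; 1, 0], !![0, 1; 1, 0], by simp [one_fin_two],
    by simp [one_fin_two]⟩
  refine ⟨U, eq_mul_inv_of_mul_eq (Subtype.ext ?_)⟩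
  change fromBlocks _ _ _ _ * fromBlocks !![0, 1; 1, 0] 0 0 !![0, 1; 1, 0]ᵀ
    = fromBlocks !![0, 1; 1, 0] 0 0 !![0, 1; 1, 0]ᵀ * fromBlocks _ _ _ _
  simp only [fromBlocks_multiply]
  congr 1 <;> ext i j <;> fin_cases i <;> fin_cases j <;>
    simp [mul_apply, vecMul_diagonal]

variable {Γ : Subgroup (symplecticGroup (Fin 2) ℤ)}

theorem mem_of_toBlocks_col_zero (htranslation : ∀ S hS, translation S hS ∈ Γ)
    (hlevi : ∀ U, levi U ∈ Γ) (hdiag : ∀ g, diagSL g ∈ Γ) {M : symplecticGroup (Fin 2) ℤ}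
    (hA : M.val.toBlocks₁₁ 1 0 = 0) (hC : ∀ i, M.val.toBlocks₂₁ i 0 = 0) : M ∈ Γ := by
  obtain ⟨hAC, -, hAD⟩ :=
    SymplecticGroup.fromBlocks_mem_iff.1 ((fromBlocks_toBlocks M.val).symm ▸ M.2)
  have hA00 : M.val.toBlocks₁₁ 0 0 ≠ 0 := fun h => by
    simpa [mul_apply, hA, hC, h] using congrFun₂ hAD 0 0
  have hC01 : M.val.toBlocks₂₁ 0 1 = 0 := by
    simpa [mul_apply, hA, hC, hA00] using congrFun₂ hAC 0 1
  obtain ⟨g, hg⟩ := exists_SL2_row_mul_add_mul_eq_zero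
    (M.val.toBlocks₁₁ 1 1) (M.val.toBlocks₂₁ 1 1)
  refine (Γ.mul_mem_cancel_left (hdiag (Pi.mulSingle 1 g))).1
    (mem_of_toBlocks₂₁_eq_zero htranslation hlevi ?_)
  ext i j
  rw [toBlocks₂₁_diagSL_mul]
  fin_cases i <;> fin_cases j <;> simp [hA, hC, hC01, hg]

theorem eq_top_of_translation_levi_S_mem (htranslation : ∀ S hS, translation S hS ∈ Γ)
    (hlevi : ∀ U, levi U ∈ Γ) (hS : diagSL (Pi.mulSingle 0 ModularGroup.S) ∈ Γ) : Γ = ⊤ := by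
  have hdiag (g) : diagSL g ∈ Γ := by
    refine diagSL_mem htranslation (fun i => ?_) g
    fin_cases i
    · exact hS
    · obtain ⟨U, hU⟩ := diagSL_mulSingle_one ModularGroup.S
      exact hU ▸ mul_mem (mul_mem (hlevi U) hS) (inv_mem (hlevi U))
  refine Γ.eq_top_iff'.2 fun M => ?_
  choose g hg using fun i =>
    exists_SL2_row_mul_add_mul_eq_zero (M.val.toBlocks₁₁ i 0) (M.val.toBlocks₂₁ i 0)
  refine (Γ.mul_mem_cancel_left (hdiag g)).1 ?_
  set N := diagSL g * M
  have hC (i) : N.val.toBlocks₂₁ i 0 = 0 := by rw [toBlocks₂₁_diagSL_mul, hg]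
  obtain ⟨h, hh⟩ :=
    exists_SL2_row_mul_add_mul_eq_zero (N.val.toBlocks₁₁ 0 0) (N.val.toBlocks₁₁ 1 0)
  refine (Γ.mul_mem_cancel_left (hlevi h)).1
    (mem_of_toBlocks_col_zero htranslation hlevi hdiag ?_ fun i => ?_)
  · rw [toBlocks₁₁_levi_mul, mul_apply, Fin.sum_univ_two]
    exact hh
  · rw [toBlocks₂₁_levi_mul, mul_apply]
    simp only [hC, mul_zero, Finset.sum_const_zero]

end Generators

section GeneratorActions

open Matrix

section

variable {n : Type*} [Fintype n] [DecidableEq n] (τ : Matrix n n ℂ)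

theorem complexMatrix_translation (S : Matrix n n ℤ) (hS : S.IsSymm) :
    complexMatrix (translation S hS) = fromBlocks 1 (S.map Int.cast) 0 1 := by
  change (fromBlocks 1 S 0 1).map (Int.cast : ℤ → ℂ) = _
  simp [fromBlocks_map]

theorem den_translation (S : Matrix n n ℤ) (hS : S.IsSymm) :
    den (complexMatrix (translation S hS)) τ = 1 := by
  rw [complexMatrix_translation, den_fromBlocks, Matrix.zero_mul, zero_add]

theorem act_translation (S : Matrix n n ℤ) (hS : S.IsSymm) :
    act (complexMatrix (translation S hS)) τ = τ + S.map Int.cast := by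
  rw [act, den_translation, complexMatrix_translation, num_fromBlocks, inv_one, mul_one, one_mul]

theorem complexMatrix_levi (U : GL n ℤ) :
    complexMatrix (levi U)
      = fromBlocks (U.val.map Int.cast) 0 0 ((U⁻¹).val.map Int.cast)ᵀ := by
  change (fromBlocks U.val 0 0 (U⁻¹).valᵀ).map (Int.cast : ℤ → ℂ) = _
  simp only [fromBlocks_map, transpose_map, Matrix.map_zero _ Int.cast_zero]

theorem den_levi (U : GL n ℤ) :
    den (complexMatrix (levi U)) τ = ((U⁻¹).val.map Int.cast)ᵀ := by
  rw [complexMatrix_levi, den_fromBlocks, Matrix.zero_mul, zero_add]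

theorem act_levi (U : GL n ℤ) :
    act (complexMatrix (levi U)) τ = U.val.map Int.cast * τ * (U.val.map Int.cast)ᵀ := by
  have hinv : ((U⁻¹).val.map (Int.cast : ℤ → ℂ))ᵀ⁻¹ = (U.val.map Int.cast)ᵀ := by
    refine inv_eq_left_inv ?_
    rw [← transpose_mul, ← Matrix.map_mul_intCast, Units.inv_mul]
    simp
  rw [act, den_levi, complexMatrix_levi, num_fromBlocks, add_zero, hinv]

end

/-- The symplectic matrix of genus `2` inverting the first coordinate, `τ₀₀ ↦ -1 / τ₀₀`. -/
def partialInversion : symplecticGroup (Fin 2) ℤ := diagSL (Pi.mulSingle 0 ModularGroup.S)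

theorem complexMatrix_partialInversion :
    complexMatrix partialInversion
      = fromBlocks !![0, 0; 0, 1] !![-1, 0; 0, 0] !![1, 0; 0, 0] !![0, 0; 0, 1] := by
  change (fromBlocks _ _ _ _).map (Int.cast : ℤ → ℂ) = _
  simp only [mulSingle_SL2_apply, fromBlocks_map]
  congr 1 <;> ext i j <;> fin_cases i <;> fin_cases j <;> simp [ModularGroup.S]

variable (τ : Matrix (Fin 2) (Fin 2) ℂ)

theorem den_partialInversion :
    den (complexMatrix partialInversion) τ = !![τ 0 0, τ 0 1; 0, 1] := by
  rw [complexMatrix_partialInversion, den_fromBlocks]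
  ext i j
  fin_cases i <;> fin_cases j <;> simp [vecMul, dotProduct]

theorem num_partialInversion :
    num (complexMatrix partialInversion) τ = !![-1, 0; τ 1 0, τ 1 1] := by
  rw [complexMatrix_partialInversion, num_fromBlocks]
  ext i j
  fin_cases i <;> fin_cases j <;> simp [vecMul, dotProduct]

variable {τ}

theorem act_partialInversion (hτ : τᵀ = τ) (h0 : τ 0 0 ≠ 0) :
    act (complexMatrix partialInversion) τ
      = !![-1 / τ 0 0, τ 0 1 / τ 0 0; τ 0 1 / τ 0 0, τ 1 1 - τ 0 1 ^ 2 / τ 0 0] := by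
  have h10 : τ 1 0 = τ 0 1 := congrFun₂ hτ 0 1
  rw [act, den_partialInversion, num_partialInversion, inv_def, det_fin_two_of, adjugate_fin_two_of]
  ext i j
  fin_cases i <;> fin_cases j <;> simp [h10] <;> field_simp
  ring

end GeneratorActions

section ThetaSeries

open Matrix Complex

variable {n : Type*}

/-- The point `m + a / 2` of the lattice shifted by half a characteristic. -/
noncomputable def halfShift (a m : n → ℤ) : n → ℂ := fun i => m i + a i / 2

theorem halfShift_add_two_smul (a k m : n → ℤ) :
    halfShift (a + (2 : ℤ) • k) m = halfShift a (m + k) := by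
  ext i
  simp only [halfShift, Pi.add_apply, Pi.smul_apply, smul_eq_mul]
  push_cast
  ring

theorem exists_eq_add_two_smul {a a' : n → ℤ} (h : ∀ i, (a i : ZMod 2) = a' i) :
    ∃ k : n → ℤ, a = a' + (2 : ℤ) • k := by
  choose k hk using fun i => (ZMod.intCast_eq_intCast_iff_dvd_sub _ _ 2).1 (h i).symm
  exact ⟨k, funext fun i => by simpa [sub_eq_iff_eq_add'] using hk i⟩

theorem exp_pi_mul_I_mul_two_mul_intCast (q : ℤ) : cexp (Real.pi * I * (2 * q)) = 1 :=
  exp_eq_one_iff.2 ⟨q, by ring⟩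

theorem exp_pi_mul_I_mul_intCast_sq (q : ℤ) : cexp (Real.pi * I * q) ^ 2 = 1 := by
  rw [← exp_nat_mul, ← exp_pi_mul_I_mul_two_mul_intCast q]
  congr 1
  push_cast
  ring

variable [Fintype n]

/-- The exponential `exp (πi (xᵀ τ x + x · b))`, whose values at the points of a shifted lattice are
the terms of a theta series. -/
noncomputable def thetaTerm (b : n → ℤ) (τ : Matrix n n ℂ) (x : n → ℂ) : ℂ :=
  cexp (Real.pi * I * (x ⬝ᵥ τ *ᵥ x + x ⬝ᵥ (Int.cast ∘ b)))

/-- The theta constant `θ[a; b](τ)` in arbitrary genus and with an arbitrary integral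
characteristic. -/
noncomputable def thetaConst (a b : n → ℤ) (τ : Matrix n n ℂ) : ℂ :=
  ∑' m, thetaTerm b τ (halfShift a m)

theorem theta_eq_thetaConst (κ : Char) (τ : Mat2) : theta κ τ = thetaConst κ.1 κ.2 τ := by
  simp only [theta, thetaConst, thetaTerm, halfShift, dotProduct, mulVec, Finset.mul_sum,
    mul_assoc, Function.comp_apply]

theorem halfShift_dotProduct_intCast (a m b : n → ℤ) :
    halfShift a m ⬝ᵥ (Int.cast ∘ b) = (m ⬝ᵥ b : ℤ) + (a ⬝ᵥ b : ℤ) / 2 := by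
  simp only [dotProduct, halfShift, Function.comp_apply, Int.cast_sum, Int.cast_mul,
    Finset.sum_div, ← Finset.sum_add_distrib]
  exact Finset.sum_congr rfl fun i _ => by ring

theorem thetaConst_add_two_smul_left (a b k : n → ℤ) (τ : Matrix n n ℂ) :
    thetaConst (a + (2 : ℤ) • k) b τ = thetaConst a b τ := by
  simp only [thetaConst, halfShift_add_two_smul]
  exact (Equiv.addRight k).tsum_eq fun m => thetaTerm b τ (halfShift a m)

theorem thetaTerm_add_two_smul (a b k m : n → ℤ) (τ : Matrix n n ℂ) :
    thetaTerm (b + (2 : ℤ) • k) τ (halfShift a m)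
      = cexp (Real.pi * I * (a ⬝ᵥ k : ℤ)) * thetaTerm b τ (halfShift a m) := by
  rw [← mul_one (cexp _ * _), ← exp_pi_mul_I_mul_two_mul_intCast (m ⬝ᵥ k), thetaTerm, thetaTerm,
    ← exp_add, ← exp_add]
  simp only [halfShift_dotProduct_intCast, dotProduct_add, dotProduct_smul, smul_eq_mul]
  congr 1
  push_cast
  ring

theorem thetaConst_add_two_smul_right (a b k : n → ℤ) (τ : Matrix n n ℂ) :
    thetaConst a (b + (2 : ℤ) • k) τ = cexp (Real.pi * I * (a ⬝ᵥ k : ℤ)) * thetaConst a b τ := by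
  simp only [thetaConst, thetaTerm_add_two_smul, tsum_mul_left]

theorem thetaConst_sq_congr {a a' b b' : n → ℤ} (ha : ∀ i, (a i : ZMod 2) = a' i)
    (hb : ∀ i, (b i : ZMod 2) = b' i) (τ : Matrix n n ℂ) :
    thetaConst a b τ ^ 2 = thetaConst a' b' τ ^ 2 := by
  obtain ⟨k, rfl⟩ := exists_eq_add_two_smul ha
  obtain ⟨l, rfl⟩ := exists_eq_add_two_smul hb
  rw [thetaConst_add_two_smul_left, thetaConst_add_two_smul_right, mul_pow,
    exp_pi_mul_I_mul_intCast_sq, one_mul]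

theorem halfShift_vecMul (a m : n → ℤ) (U : Matrix n n ℤ) :
    halfShift (a ᵥ* U) (m ᵥ* U) = halfShift a m ᵥ* U.map Int.cast := by
  ext i
  simp only [halfShift, vecMul, dotProduct, Matrix.map_apply, Int.cast_sum, Int.cast_mul,
    Finset.sum_div, ← Finset.sum_add_distrib]
  exact Finset.sum_congr rfl fun j _ => by ring

theorem intCast_comp_mulVec {R : Type*} [CommRing R] (U : Matrix n n ℤ) (v : n → ℤ) :
    (Int.cast ∘ (U *ᵥ v) : n → R) = U.map Int.cast *ᵥ (Int.cast ∘ v) :=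
  funext fun i => RingHom.map_mulVec (Int.castRingHom R) U v i

theorem intCast_comp_vecMul {R : Type*} [CommRing R] (v : n → ℤ) (U : Matrix n n ℤ) :
    (Int.cast ∘ (v ᵥ* U) : n → R) = (Int.cast ∘ v) ᵥ* U.map Int.cast :=
  funext fun i => RingHom.map_vecMul (Int.castRingHom R) U v i

section Levi

variable [DecidableEq n]

theorem thetaTerm_conj (b : n → ℤ) (τ : Matrix n n ℂ) (U : GL n ℤ) (x : n → ℂ) :
    thetaTerm b (U.val.map Int.cast * τ * (U.val.map Int.cast)ᵀ) x
      = thetaTerm ((U⁻¹).val *ᵥ b) τ (x ᵥ* U.val.map Int.cast) := by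
  have hb : (Int.cast ∘ b : n → ℂ) = U.val.map Int.cast *ᵥ (Int.cast ∘ ((U⁻¹).val *ᵥ b)) := by
    rw [← intCast_comp_mulVec, mulVec_mulVec, Units.mul_inv, one_mulVec]
  rw [thetaTerm, thetaTerm, ← dotProduct_mulVec, ← dotProduct_mulVec, ← hb, ← mulVec_mulVec,
    ← mulVec_mulVec, mulVec_transpose]

theorem thetaConst_conj (a b : n → ℤ) (τ : Matrix n n ℂ) (U : GL n ℤ) :
    thetaConst a b (U.val.map Int.cast * τ * (U.val.map Int.cast)ᵀ)
      = thetaConst (a ᵥ* U.val) ((U⁻¹).val *ᵥ b) τ := by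
  have hbij : Function.Bijective (· ᵥ* U.val) := by
    refine Function.bijective_iff_has_inverse.2 ⟨(· ᵥ* (U⁻¹).val), fun m => ?_, fun m => ?_⟩ <;>
      simp [-coe_units_inv]
  simp only [thetaConst, thetaTerm_conj, ← halfShift_vecMul]
  exact (Equiv.ofBijective _ hbij).tsum_eq fun m => thetaTerm _ τ (halfShift _ m)

end Levi

theorem dotProduct_mulVec_self_of_charTwo {R : Type*} [CommRing R] [CharP R 2] {S : Matrix n n R}
    (hS : S.IsSymm) (m : n → R) : m ⬝ᵥ S *ᵥ m = ∑ i, S i i * m i ^ 2 := by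
  classical
  have hoffDiag : ∑ p ∈ Finset.univ.offDiag, m p.1 * (S p.1 p.2 * m p.2) = 0 := by
    refine Finset.sum_involution (fun p _ => p.swap) (fun p _ => ?_) (fun p hp _ h => ?_)
      (fun p hp => by simpa [eq_comm] using hp) fun p _ => p.swap_swap
    · rw [Prod.fst_swap, Prod.snd_swap, hS.apply, mul_left_comm (m p.2), mul_comm (m p.2),
        mul_left_comm, CharTwo.add_self_eq_zero]
    · exact (Finset.mem_offDiag.1 hp).2.2 (congrArg Prod.snd h)
  simp only [dotProduct, mulVec, Finset.mul_sum]
  rw [← Finset.sum_product', ← Finset.diag_union_offDiag,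
    Finset.sum_union (Finset.disjoint_diag_offDiag _), hoffDiag, add_zero, Finset.sum_diag]
  exact Finset.sum_congr rfl fun i _ => by ring

theorem even_dotProduct_mulVec_self_sub {S : Matrix n n ℤ} (hS : S.IsSymm) (m : n → ℤ) :
    Even (m ⬝ᵥ S *ᵥ m - m ⬝ᵥ S.diag) := by
  have h := dotProduct_mulVec_self_of_charTwo (hS.map (Int.cast : ℤ → ZMod 2)) (Int.cast ∘ m)
  rw [even_iff_two_dvd, ← Nat.cast_two, ← ZMod.intCast_zmod_eq_zero_iff_dvd, Int.cast_sub,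
    sub_eq_zero]
  simpa [dotProduct, mulVec, Matrix.map_apply, ZMod.pow_card, mul_comm] using h

theorem halfShift_dotProduct_mulVec_self {S : Matrix n n ℤ} (hS : S.IsSymm) (a m : n → ℤ) :
    halfShift a m ⬝ᵥ S.map Int.cast *ᵥ halfShift a m
      = (m ⬝ᵥ S *ᵥ m : ℤ) + (m ⬝ᵥ S *ᵥ a : ℤ) + (a ⬝ᵥ S *ᵥ a : ℤ) / 4 := by
  have hshift : halfShift a m = (2⁻¹ : ℂ) • (Int.cast ∘ ((2 : ℤ) • m + a)) := by
    ext i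
    simp only [halfShift, Pi.smul_apply, Function.comp_apply, Pi.add_apply, smul_eq_mul]
    push_cast
    ring
  have hsymm : a ⬝ᵥ S *ᵥ m = m ⬝ᵥ S *ᵥ a := by
    rw [dotProduct_mulVec, dotProduct_comm, ← mulVec_transpose, hS.eq]
  have hcast (v w : n → ℤ) : (Int.cast ∘ v : n → ℂ) ⬝ᵥ (Int.cast ∘ w) = (v ⬝ᵥ w : ℤ) :=
    (RingHom.map_dotProduct (Int.castRingHom ℂ) v w).symm
  rw [hshift, mulVec_smul, dotProduct_smul, smul_dotProduct, ← intCast_comp_mulVec, hcast]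
  simp only [mulVec_add, mulVec_smul, dotProduct_add, add_dotProduct, dotProduct_smul,
    smul_dotProduct, smul_eq_mul, hsymm]
  push_cast
  ring

theorem thetaTerm_add_intCast {S : Matrix n n ℤ} (hS : S.IsSymm) (a b m : n → ℤ)
    (τ : Matrix n n ℂ) :
    thetaTerm b (τ + S.map Int.cast) (halfShift a m)
      = cexp (-(Real.pi * I * ((a ⬝ᵥ S *ᵥ a : ℤ) / 4 + (a ⬝ᵥ S.diag : ℤ) / 2)))
        * thetaTerm (b + S *ᵥ a + S.diag) τ (halfShift a m) := by
  obtain ⟨q, hq⟩ := even_dotProduct_mulVec_self_sub hS m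
  rw [← mul_one (cexp _ * _), ← exp_pi_mul_I_mul_two_mul_intCast q, thetaTerm, thetaTerm,
    ← exp_add, ← exp_add, add_mulVec, dotProduct_add, halfShift_dotProduct_mulVec_self hS]
  simp only [halfShift_dotProduct_intCast, dotProduct_add]
  have hq' : ((m ⬝ᵥ S *ᵥ m : ℤ) : ℂ) - (m ⬝ᵥ S.diag : ℤ) = q + q := by exact_mod_cast hq
  congr 1
  push_cast
  linear_combination Real.pi * I * hq'

theorem thetaConst_add_intCast {S : Matrix n n ℤ} (hS : S.IsSymm) (a b : n → ℤ)
    (τ : Matrix n n ℂ) :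
    thetaConst a b (τ + S.map Int.cast)
      = cexp (-(Real.pi * I * ((a ⬝ᵥ S *ᵥ a : ℤ) / 4 + (a ⬝ᵥ S.diag : ℤ) / 2)))
        * thetaConst a (b + S *ᵥ a + S.diag) τ := by
  simp only [thetaConst, thetaTerm_add_intCast hS, tsum_mul_left]

end ThetaSeries

section Summability

open Matrix Complex
open scoped MatrixOrder

variable {n : Type*} [Fintype n]

theorem exists_pos_mul_dotProduct_self_le [Nonempty n] {Y : Matrix n n ℝ} (hY : Y.PosDef) :
    ∃ c > 0, ∀ x : n → ℝ, c * (x ⬝ᵥ x) ≤ x ⬝ᵥ Y *ᵥ x := by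
  classical
  have hpos := isStrictlyPositive_iff_posDef.2 hY
  obtain ⟨c, hc, hle⟩ := (CFC.exists_pos_algebraMap_le_iff (a := Y) hpos.isSelfAdjoint).2
    fun _ hx => hpos.spectrum_pos hx
  refine ⟨c, hc, fun x => ?_⟩
  have hsub := (Matrix.le_iff.1 hle).dotProduct_mulVec_nonneg x
  simpa only [star_trivial, sub_mulVec, Algebra.algebraMap_eq_smul_one, smul_mulVec, one_mulVec,
    dotProduct_sub, dotProduct_smul, smul_eq_mul, sub_nonneg] using hsub

theorem norm_thetaTerm_ofReal (b : n → ℤ) (τ : Matrix n n ℂ) (x : n → ℝ) :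
    ‖thetaTerm b τ (Complex.ofReal ∘ x)‖
      = Real.exp (-(Real.pi * (x ⬝ᵥ τ.map Complex.im *ᵥ x))) := by
  have him : ((Complex.ofReal ∘ x) ⬝ᵥ τ *ᵥ (Complex.ofReal ∘ x)
      + (Complex.ofReal ∘ x) ⬝ᵥ (Int.cast ∘ b)).im = x ⬝ᵥ τ.map Complex.im *ᵥ x := by
    simp [dotProduct, mulVec]
  rw [thetaTerm, norm_exp, mul_assoc, re_ofReal_mul, I_mul_re, him, mul_neg]

theorem summable_exp_neg_mul_add_sq {c : ℝ} (hc : 0 < c) (s : ℝ) :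
    Summable fun k : ℤ => Real.exp (-(Real.pi * c * (k + s) ^ 2)) := by
  have h := ((summable_jacobiTheta₂_term_iff ((c * s : ℝ) * I) (c * I)).2 (by simpa using hc)).norm
  refine (h.mul_left (Real.exp (-(Real.pi * c * s ^ 2)))).congr fun k => ?_
  rw [norm_jacobiTheta₂_term, ← Real.exp_add]
  congr 1
  simp only [neg_mul, mul_im, ofReal_re, I_im, mul_one, ofReal_im, I_re, mul_zero, add_zero,
    ofReal_mul, mul_re, sub_zero, zero_mul]
  ring

theorem summable_prod_pi_of_nonneg {ι : Type*} {f : n → ι → ℝ} (hnonneg : ∀ i k, 0 ≤ f i k)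
    (hf : ∀ i, Summable (f i)) : Summable fun m : n → ι => ∏ i, f i (m i) := by
  classical
  -- Every finite set of functions lies in a box, over which the sum factors.
  refine summable_of_sum_le (c := ∏ i, ∑' k, f i k)
    (fun m => Finset.prod_nonneg fun i _ => hnonneg i (m i)) fun s => ?_
  let box : n → Finset ι := fun i => s.image (· i)
  calc ∑ m ∈ s, ∏ i, f i (m i)
      ≤ ∑ m ∈ Fintype.piFinset box, ∏ i, f i (m i) :=
        Finset.sum_le_sum_of_subset_of_nonneg
          (fun m hm => Fintype.mem_piFinset.2 fun i => Finset.mem_image_of_mem _ hm)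
          fun m _ _ => Finset.prod_nonneg fun i _ => hnonneg i (m i)
    _ = ∏ i, ∑ k ∈ box i, f i k := (Finset.prod_univ_sum box f).symm
    _ ≤ ∏ i, ∑' k, f i k :=
        Finset.prod_le_prod (fun i _ => Finset.sum_nonneg fun k _ => hnonneg i k)
          fun i _ => (hf i).sum_le_tsum _ fun k _ => hnonneg i k

theorem summable_thetaTerm [Nonempty n] {τ : Matrix n n ℂ} (hτ : τ ∈ siegelUpperHalfSpace n)
    (a b : n → ℤ) : Summable fun m => thetaTerm b τ (halfShift a m) := by
  obtain ⟨c, hc, hle⟩ := exists_pos_mul_dotProduct_self_le hτ.2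
  refine Summable.of_norm_bounded (summable_prod_pi_of_nonneg (fun _ _ => (Real.exp_pos _).le)
    fun i => summable_exp_neg_mul_add_sq hc (a i / 2)) fun m => ?_
  have hreal : halfShift a m = Complex.ofReal ∘ fun i => (m i + a i / 2 : ℝ) := by
    ext i
    simp [halfShift]
  have hexp := mul_le_mul_of_nonneg_left (hle fun i => m i + a i / 2) Real.pi_pos.le
  rw [hreal, norm_thetaTerm_ofReal, ← Real.exp_sum, Real.exp_le_exp, Finset.sum_neg_distrib]
  refine (neg_le_neg hexp).trans_eq ?_
  simp only [dotProduct, Finset.mul_sum, mul_assoc, sq]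

end Summability

section PartialInversion

open Matrix Complex

theorem tsum_exp_quadratic_inversion (α β : ℂ) {t : ℂ} (ht : t ≠ 0) :
    ∑' k : ℤ, cexp (Real.pi * I * (-(k + α) ^ 2 / t + 2 * (k + α) * β))
      = (-I * t) ^ (1 / 2 : ℂ) * ∑' k : ℤ, cexp (Real.pi * I * ((k + β) ^ 2 * t - 2 * k * α)) := by
  have hroot : (-I * t) ^ (1 / 2 : ℂ) ≠ 0 :=
    (cpow_ne_zero_iff_of_exponent_ne_zero (by norm_num)).2
      (mul_ne_zero (neg_ne_zero.2 I_ne_zero) ht)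
  have hleft (k : ℤ) : cexp (Real.pi * I * (-(k + α) ^ 2 / t + 2 * (k + α) * β))
      = cexp (Real.pi * I * (β ^ 2 * t)) * cexp (-Real.pi * I * (β * t - α) ^ 2 / t)
        * jacobiTheta₂_term k ((β * t - α) / t) (-1 / t) := by
    rw [jacobiTheta₂_term, ← exp_add, ← exp_add]
    congr 1
    field_simp
    ring
  have hright (k : ℤ) : cexp (Real.pi * I * ((k + β) ^ 2 * t - 2 * k * α))
      = cexp (Real.pi * I * (β ^ 2 * t)) * jacobiTheta₂_term k (β * t - α) t := by
    rw [jacobiTheta₂_term, ← exp_add]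
    congr 1
    ring
  simp only [hleft, hright, tsum_mul_left]
  change _ * jacobiTheta₂ _ _ = _ * (_ * jacobiTheta₂ _ _)
  rw [jacobiTheta₂_functional_equation (β * t - α) t]
  field_simp [hroot]

theorem thetaTerm_fin_two (b : Fin 2 → ℤ) {τ : Matrix (Fin 2) (Fin 2) ℂ} (hτ : τᵀ = τ)
    (x : Fin 2 → ℂ) :
    thetaTerm b τ x = cexp (Real.pi * I * (x 0 ^ 2 * τ 0 0 + 2 * x 0 * x 1 * τ 0 1
      + x 1 ^ 2 * τ 1 1 + x 0 * b 0 + x 1 * b 1)) := by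
  have h10 : τ 1 0 = τ 0 1 := congrFun₂ hτ 0 1
  simp only [thetaTerm, dotProduct, mulVec, Fin.sum_univ_two, h10, Function.comp_apply]
  congr 1
  ring

theorem tsum_fin_two_arrow {ι E : Type*} [NormedAddCommGroup E] [CompleteSpace E]
    {f : (Fin 2 → ι) → E} (hf : Summable f) : ∑' m, f m = ∑' k, ∑' j, f ![j, k] := by
  let e : ι × ι ≃ (Fin 2 → ι) := (Equiv.prodComm ι ι).trans (finTwoArrowEquiv ι).symm
  rw [← e.tsum_eq f]
  exact (e.summable_iff.2 hf).tsum_prod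

theorem tsum_thetaTerm_act_partialInversion (a b : Fin 2 → ℤ) {τ : Matrix (Fin 2) (Fin 2) ℂ}
    (hτ : τᵀ = τ) (h0 : τ 0 0 ≠ 0) (k : ℤ) :
    ∑' j : ℤ, thetaTerm b (act (complexMatrix partialInversion) τ) (halfShift a ![j, k])
      = (-I * τ 0 0) ^ (1 / 2 : ℂ) * cexp (Real.pi * I * (a 0 * b 0 / 2))
        * ∑' j : ℤ, thetaTerm ![-a 0, b 1] τ (halfShift ![b 0, a 1] ![j, k]) := by
  have hact := act_partialInversion hτ h0
  have hsymm : (act (complexMatrix partialInversion) τ)ᵀ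
      = act (complexMatrix partialInversion) τ := by
    rw [hact]
    ext i j
    fin_cases i <;> fin_cases j <;> rfl
  -- For a fixed second coordinate `y` both sums are one-dimensional Gaussian sums, exchanged by
  -- `tsum_exp_quadratic_inversion` with `α = a₀ / 2 - y τ₀₁` and `β = b₀ / 2`.
  set y : ℂ := k + a 1 / 2
  set E : ℂ := cexp (Real.pi * I * (y ^ 2 * τ 1 1 + y * τ 0 1 * b 0 + y * b 1))
  have hleft (j : ℤ) :
      thetaTerm b (act (complexMatrix partialInversion) τ) (halfShift a ![j, k])
        = E * cexp (Real.pi * I * (-(j + (a 0 / 2 - y * τ 0 1)) ^ 2 / τ 0 0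
          + 2 * (j + (a 0 / 2 - y * τ 0 1)) * (b 0 / 2))) := by
    rw [thetaTerm_fin_two b hsymm, ← exp_add, hact]
    congr 1
    simp only [halfShift, of_apply, cons_val', cons_val_zero, cons_val_one, cons_val_fin_one]
    field_simp
    ring
  have hright (j : ℤ) :
      cexp (Real.pi * I * (a 0 * b 0 / 2))
        * thetaTerm ![-a 0, b 1] τ (halfShift ![b 0, a 1] ![j, k])
        = E * cexp (Real.pi * I * ((j + b 0 / 2) ^ 2 * τ 0 0
          - 2 * j * (a 0 / 2 - y * τ 0 1))) := by
    rw [thetaTerm_fin_two _ hτ, ← exp_add, ← exp_add]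
    congr 1
    simp only [halfShift, cons_val_zero, cons_val_one, cons_val_fin_one, Int.cast_neg, mul_neg]
    ring
  simp only [hleft]
  rw [mul_assoc, ← tsum_mul_left (a := cexp _), tsum_mul_left, tsum_exp_quadratic_inversion _ _ h0]
  simp only [hright, tsum_mul_left]
  ring

theorem thetaConst_act_partialInversion (a b : Fin 2 → ℤ) {τ : Matrix (Fin 2) (Fin 2) ℂ}
    (hτ : τ ∈ siegelUpperHalfSpace (Fin 2)) :
    thetaConst a b (act (complexMatrix partialInversion) τ)
      = (-I * τ 0 0) ^ (1 / 2 : ℂ) * cexp (Real.pi * I * (a 0 * b 0 / 2))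
        * thetaConst ![b 0, a 1] ![-a 0, b 1] τ := by
  have h0 : τ 0 0 ≠ 0 := fun h => by simpa [h] using hτ.2.diag_pos (i := 0)
  rw [thetaConst, thetaConst, tsum_fin_two_arrow (summable_thetaTerm hτ _ _),
    tsum_fin_two_arrow (summable_thetaTerm (act_complexMatrix_mem partialInversion hτ) _ _),
    ← tsum_mul_left]
  simp only [tsum_thetaTerm_act_partialInversion a b hτ.1 h0]

end PartialInversion

section Characteristics

open Matrix

/-- The class modulo `2` of a characteristic, which determines the square of its theta constant. -/
def charModTwo (κ : Char) : (Fin 2 → ZMod 2) × (Fin 2 → ZMod 2) := (Int.cast ∘ κ.1, Int.cast ∘ κ.2)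

theorem theta_sq_eq_of_charModTwo_eq {κ κ' : Char} (h : charModTwo κ = charModTwo κ') (τ : Mat2) :
    theta κ τ ^ 2 = theta κ' τ ^ 2 := by
  obtain ⟨ha, hb⟩ := Prod.ext_iff.1 h
  rw [theta_eq_thetaConst, theta_eq_thetaConst]
  exact thetaConst_sq_congr (congrFun ha) (congrFun hb) τ

theorem isEvenChar_iff_even {κ : Char} : IsEvenChar κ ↔ Even (κ.1 ⬝ᵥ κ.2) :=
  Int.even_iff.symm

theorem isEvenChar_iff_charModTwo {κ : Char} :
    IsEvenChar κ ↔ (charModTwo κ).1 ⬝ᵥ (charModTwo κ).2 = 0 := by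
  rw [isEvenChar_iff_even, even_iff_two_dvd, ← Nat.cast_two, ← ZMod.intCast_zmod_eq_zero_iff_dvd]
  exact iff_of_eq (congrArg (· = 0) (RingHom.map_dotProduct (Int.castRingHom (ZMod 2)) κ.1 κ.2))

theorem isEvenChar_δev (d : Fin 10) : IsEvenChar (δev d) := by
  unfold IsEvenChar
  revert d
  decide

theorem charModTwo_comp_δev_injective : Function.Injective (charModTwo ∘ δev) := by
  decide

theorem exists_charModTwo_δev_eq {κ : Char} (hκ : IsEvenChar κ) :
    ∃ d, charModTwo (δev d) = charModTwo κ := by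
  have hall : ∀ c : (Fin 2 → ZMod 2) × (Fin 2 → ZMod 2), c.1 ⬝ᵥ c.2 = 0 →
      ∃ d, charModTwo (δev d) = c := by decide
  exact hall _ (isEvenChar_iff_charModTwo.1 hκ)

theorem prod_theta_sq_map_δev {T : Char → Char} (heven : ∀ κ, IsEvenChar κ → IsEvenChar (T κ))
    (hinj : ∀ κ κ', charModTwo (T κ) = charModTwo (T κ') → charModTwo κ = charModTwo κ')
    (τ : Mat2) : ∏ d, theta (T (δev d)) τ ^ 2 = Ψ10 τ := by
  choose σ hσ using fun d => exists_charModTwo_δev_eq (heven _ (isEvenChar_δev d))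
  have hσ_inj : Function.Injective σ := fun d e hde =>
    charModTwo_comp_δev_injective <| hinj _ _ <| by rw [← hσ, hde, hσ]
  rw [Ψ10, ← (Equiv.ofBijective σ (Finite.injective_iff_bijective.1 hσ_inj)).prod_comp
    fun d => theta (δev d) τ ^ 2]
  exact Finset.prod_congr rfl fun d _ => theta_sq_eq_of_charModTwo_eq (hσ d).symm τ

end Characteristics

section Weight

open Matrix Complex

variable {S : Matrix (Fin 2) (Fin 2) ℤ} (τ : Mat2)

theorem theta_sq_add_intCast (hS : S.IsSymm) (κ : Char) :
    theta κ (τ + S.map Int.cast) ^ 2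
      = cexp (-(Real.pi * I * ((κ.1 ⬝ᵥ S *ᵥ κ.1 : ℤ) / 2 + (κ.1 ⬝ᵥ S.diag : ℤ))))
        * theta (κ.1, κ.2 + S *ᵥ κ.1 + S.diag) τ ^ 2 := by
  rw [theta_eq_thetaConst, theta_eq_thetaConst, thetaConst_add_intCast hS, mul_pow, ← exp_nat_mul]
  congr 2
  push_cast
  ring

theorem sum_translation_phase_δev (hS : S.IsSymm) :
    ∑ d, ((((δev d).1 ⬝ᵥ S *ᵥ (δev d).1 : ℤ) : ℂ) / 2 + ((δev d).1 ⬝ᵥ S.diag : ℤ))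
      = 2 * (3 * (S 0 0 + S 1 1) + S 0 1 : ℤ) := by
  have h10 : S 1 0 = S 0 1 := hS.apply 0 1
  simp only [δev, dotProduct, mulVec, diag_apply, h10, Fin.sum_univ_succ, Finset.univ_unique,
    Finset.sum_singleton, Fin.default_eq_zero, Fin.succ_zero_eq_one,
    cons_val_zero, cons_val_one, cons_val_succ, cons_val_fin_one]
  push_cast
  ring

theorem Ψ10_add_intCast (hS : S.IsSymm) : Ψ10 (τ + S.map Int.cast) = Ψ10 τ := by
  have heven (κ : Char) (hκ : IsEvenChar κ) : IsEvenChar (κ.1, κ.2 + S *ᵥ κ.1 + S.diag) := by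
    have hdot : κ.1 ⬝ᵥ (κ.2 + S *ᵥ κ.1 + S.diag) = κ.1 ⬝ᵥ κ.2
        + (κ.1 ⬝ᵥ S *ᵥ κ.1 - κ.1 ⬝ᵥ S.diag) + 2 * κ.1 ⬝ᵥ S.diag := by
      simp only [dotProduct_add]
      ring
    rw [isEvenChar_iff_even] at hκ ⊢
    exact hdot ▸ (hκ.add (even_dotProduct_mulVec_self_sub hS κ.1)).add (even_two_mul _)
  have hinj (κ κ' : Char) (h : charModTwo (κ.1, κ.2 + S *ᵥ κ.1 + S.diag)
      = charModTwo (κ'.1, κ'.2 + S *ᵥ κ'.1 + S.diag)) : charModTwo κ = charModTwo κ' := by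
    have hcast (κ : Char) : charModTwo (κ.1, κ.2 + S *ᵥ κ.1 + S.diag)
        = ((charModTwo κ).1, (charModTwo κ).2 + S.map Int.cast *ᵥ (charModTwo κ).1
          + Int.cast ∘ S.diag) := by
      simp only [charModTwo, ← intCast_comp_mulVec, Prod.mk.injEq, true_and]
      ext i
      simp only [Function.comp_apply, Pi.add_apply, Int.cast_add]
    rw [hcast, hcast] at h
    obtain ⟨ha, hb⟩ := Prod.mk.inj h
    rw [ha] at hb
    exact Prod.ext ha (add_right_cancel (add_right_cancel hb))
  rw [← prod_theta_sq_map_δev heven hinj τ, Ψ10]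
  simp only [theta_sq_add_intCast τ hS, Finset.prod_mul_distrib]
  rw [← exp_sum, Finset.sum_neg_distrib, ← Finset.mul_sum, sum_translation_phase_δev hS,
    Complex.exp_neg, exp_pi_mul_I_mul_two_mul_intCast, inv_one, one_mul]

theorem Ψ10_conj (U : GL (Fin 2) ℤ) :
    Ψ10 (U.val.map Int.cast * τ * (U.val.map Int.cast)ᵀ) = Ψ10 τ := by
  have heven (κ : Char) (hκ : IsEvenChar κ) : IsEvenChar (κ.1 ᵥ* U.val, (U⁻¹).val *ᵥ κ.2) := by
    rw [isEvenChar_iff_even] at hκ ⊢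
    rwa [← dotProduct_mulVec, mulVec_mulVec, Units.mul_inv, one_mulVec]
  have hunit (V : GL (Fin 2) ℤ) : IsUnit (V.val.map (Int.cast : ℤ → ZMod 2)) :=
    V.isUnit.map (Int.castRingHom (ZMod 2)).mapMatrix
  have hinj (κ κ' : Char) (h : charModTwo (κ.1 ᵥ* U.val, (U⁻¹).val *ᵥ κ.2)
      = charModTwo (κ'.1 ᵥ* U.val, (U⁻¹).val *ᵥ κ'.2)) : charModTwo κ = charModTwo κ' := by
    simp only [charModTwo, intCast_comp_vecMul, intCast_comp_mulVec, Prod.mk.injEq] at h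
    exact Prod.ext (vecMul_injective_of_isUnit (hunit U) h.1)
      (mulVec_injective_of_isUnit (hunit U⁻¹) h.2)
  rw [← prod_theta_sq_map_δev heven hinj τ, Ψ10]
  simp only [theta_eq_thetaConst, thetaConst_conj]

theorem theta_sq_act_partialInversion (hτ : τ ∈ SiegelH2) (κ : Char) :
    theta κ (act (complexMatrix partialInversion) τ) ^ 2
      = -I * τ 0 0 * cexp (Real.pi * I * (κ.1 0 * κ.2 0))
        * theta (![κ.2 0, κ.1 1], ![-κ.1 0, κ.2 1]) τ ^ 2 := by
  have hroot : ((-I * τ 0 0) ^ (1 / 2 : ℂ)) ^ 2 = -I * τ 0 0 := by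
    simpa only [one_div, Nat.cast_ofNat] using cpow_nat_inv_pow (-I * τ 0 0) two_ne_zero
  rw [theta_eq_thetaConst, theta_eq_thetaConst, thetaConst_act_partialInversion _ _ hτ, mul_pow,
    mul_pow, hroot, ← exp_nat_mul]
  congr 3
  push_cast
  ring

theorem Ψ10_act_partialInversion (hτ : τ ∈ SiegelH2) :
    Ψ10 (act (complexMatrix partialInversion) τ) = τ 0 0 ^ 10 * Ψ10 τ := by
  have heven (κ : Char) (hκ : IsEvenChar κ) :
      IsEvenChar (![κ.2 0, κ.1 1], ![-κ.1 0, κ.2 1]) := by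
    have hdot : ![κ.2 0, κ.1 1] ⬝ᵥ ![-κ.1 0, κ.2 1] = κ.1 ⬝ᵥ κ.2 - 2 * (κ.1 0 * κ.2 0) := by
      simp only [dotProduct, Fin.sum_univ_two, cons_val_zero, cons_val_one, cons_val_fin_one]
      ring
    rw [isEvenChar_iff_even] at hκ ⊢
    exact hdot ▸ hκ.sub (even_two_mul _)
  have hinj (κ κ' : Char) (h : charModTwo (![κ.2 0, κ.1 1], ![-κ.1 0, κ.2 1])
      = charModTwo (![κ'.2 0, κ'.1 1], ![-κ'.1 0, κ'.2 1])) : charModTwo κ = charModTwo κ' := by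
    simp only [charModTwo, Prod.mk.injEq, funext_iff, Function.comp_apply, Fin.forall_fin_two,
      cons_val_zero, cons_val_one, cons_val_fin_one, Int.cast_neg,
      ZMod.neg_eq_self_mod_two] at h ⊢
    tauto
  have hphase : ∑ d, ((δev d).1 0 * (δev d).2 0 : ℂ) = 1 := by
    simp [Fin.sum_univ_succ, δev]
  have hI : (-I) ^ 10 = -1 := by
    rw [show 10 = 2 * 5 by rfl, pow_mul, neg_sq, I_sq]
    norm_num
  rw [← prod_theta_sq_map_δev heven hinj τ, Ψ10]
  simp only [theta_sq_act_partialInversion τ hτ, Finset.prod_mul_distrib, Finset.prod_const]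
  rw [← exp_sum, ← Finset.mul_sum, hphase, mul_one, exp_pi_mul_I, Finset.card_univ,
    Fintype.card_fin, hI]
  ring

theorem translation_mem_modularitySubgroup (hS : S.IsSymm) :
    translation S hS ∈ modularitySubgroup 10 Ψ10 := fun τ _ => by
  rw [act_translation, den_translation, det_one, one_pow, one_mul, Ψ10_add_intCast τ hS]

theorem levi_mem_modularitySubgroup (U : GL (Fin 2) ℤ) :
    levi U ∈ modularitySubgroup 10 Ψ10 := fun τ _ => by
  have hdet : (den (complexMatrix (levi U)) τ).det ^ 10 = 1 := by
    have hcast : ((U⁻¹).val.map Int.cast).det = (((U⁻¹).val.det : ℤ) : ℂ) :=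
      (RingHom.map_det (Int.castRingHom ℂ) _).symm
    have hsq : (U⁻¹).val.det ^ 2 = 1 := Int.isUnit_sq (isUnits_det_units U⁻¹)
    rw [den_levi, det_transpose, hcast, show 10 = 2 * 5 by rfl, pow_mul, ← Int.cast_pow, hsq,
      Int.cast_one, one_pow]
  rw [hdet, one_mul, act_levi, Ψ10_conj]

theorem partialInversion_mem_modularitySubgroup :
    partialInversion ∈ modularitySubgroup 10 Ψ10 := fun τ hτ => by
  rw [Ψ10_act_partialInversion τ hτ, den_partialInversion, det_fin_two_of, mul_one, mul_zero,
    sub_zero]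

theorem modularitySubgroup_Ψ10 : modularitySubgroup 10 Ψ10 = ⊤ :=
  eq_top_of_translation_levi_S_mem (fun _ => translation_mem_modularitySubgroup)
    levi_mem_modularitySubgroup partialInversion_mem_modularitySubgroup

end Weight

section Blocks

open Matrix

variable {M : Matrix (Fin 4) (Fin 4) ℤ}

theorem submatrix_mem_symplecticGroup (hM : M ∈ Sp4Z) :
    M.submatrix finSumFinEquiv finSumFinEquiv ∈ symplecticGroup (Fin 2) ℤ := by
  let e : Fin 2 ⊕ Fin 2 ≃ Fin 4 := finSumFinEquiv
  have hJ : Jmat.submatrix e e = -J (Fin 2) ℤ := by decide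
  have h : (Mᵀ * Jmat * M).submatrix e e = Jmat.submatrix e e := congrArg (submatrix · e e) hM
  simp only [← submatrix_mul_equiv _ _ _ e _, ← transpose_submatrix, hJ, mul_neg,
    neg_mul, neg_inj] at h
  exact SymplecticGroup.mem_iff'.2 h

/-- The element of Mathlib's symplectic group given by `M ∈ Sp4Z`; the index set `Fin 4` is split
into two halves. -/
def blockSymplectic (hM : M ∈ Sp4Z) : symplecticGroup (Fin 2) ℤ :=
  ⟨M.submatrix finSumFinEquiv finSumFinEquiv, submatrix_mem_symplecticGroup hM⟩

variable (hM : M ∈ Sp4Z) (τ : Mat2)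

theorem complexMatrix_blockSymplectic :
    complexMatrix (blockSymplectic hM) = fromBlocks (blkA M) (blkB M) (blkC M) (blkD M) := by
  ext (i | i) (j | j) <;> fin_cases i <;> fin_cases j <;> rfl

theorem num_blockSymplectic :
    num (complexMatrix (blockSymplectic hM)) τ = blkA M * τ + blkB M := by
  rw [complexMatrix_blockSymplectic, num_fromBlocks]

theorem den_blockSymplectic :
    den (complexMatrix (blockSymplectic hM)) τ = blkC M * τ + blkD M := by
  rw [complexMatrix_blockSymplectic, den_fromBlocks]

end Blocks

/-- `Ψ₁₀ = Π_δ θ[δ]²` is a Siegel modular form of weight 10 for `Sp(4,ℤ)`. -/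
theorem statement12 : ∀ M ∈ Sp4Z, ∀ τ ∈ SiegelH2,
    IsUnit (blkC M * τ + blkD M) ∧
    (blkA M * τ + blkB M) * (blkC M * τ + blkD M)⁻¹ ∈ SiegelH2 ∧
    Ψ10 ((blkA M * τ + blkB M) * (blkC M * τ + blkD M)⁻¹)
      = (blkC M * τ + blkD M).det ^ 10 * Ψ10 τ := by
  intro M hM τ hτ
  rw [← num_blockSymplectic hM, ← den_blockSymplectic hM]
  have hmodular : blockSymplectic hM ∈ modularitySubgroup 10 Ψ10 :=
    modularitySubgroup_Ψ10 ▸ Subgroup.mem_top _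
  exact ⟨isUnit_den_complexMatrix _ hτ, act_complexMatrix_mem _ hτ, hmodular τ hτ⟩

end TwoLoop
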